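/- arXiv:2405.09367 — 2 statements merged into one kernel-verified Lean document; each statement's English description precedes it below -/
import Mathlib

section
/- Assume the WENO weight setup with f of class C^∞ on a neighborhood of z having a critical point of exact order k at z with 0 ≤ k ≤ R−2, and assume that either R ≥ 5, or k is even, or c_j + c_{j+1} ≠ 0 for every 0 ≤ j ≤ R−2. Then for every ε > 0 and h > 0 the global weight satisfies 0 ≤ ω_{R,h} ≤ 1, and there exist C > 0 and h₀ > 0 such that for every ε > 0 and every 0 < h < h₀: 0 ≤ 1 − ω_{R,h} ≤ C·h^{2s(R−2−k)}. -/
/-- Simple smoothness indicator `I_{R,i,h}` on the nonuniform stencil `x_{i,h} = z + cᵢ h`,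
with `r = ⌊(R-1)/2⌋`. -/
noncomputable def wenoI (R : ℕ) (c : ℕ → ℝ) (z : ℝ) (f : ℝ → ℝ) (i : ℕ) (h : ℝ) : ℝ :=
  ∑ j ∈ Finset.Ico i (i + (R - 1) / 2),
    ((f (z + c (j + 1) * h) - f (z + c j * h)) / (c (j + 1) - c j)) ^ 2

/-- Squared undivided difference `d_{R,h}` of `f` on the full stencil. -/
noncomputable def wenoD (R : ℕ) (c : ℕ → ℝ) (z : ℝ) (f : ℝ → ℝ) (h : ℝ) : ℝ :=
  (((R - 1).factorial : ℝ) *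
      ∑ i ∈ Finset.range R,
        f (z + c i * h) / ∏ j ∈ (Finset.range R).erase i, (c i - c j)) ^ 2

/-- Unnormalized WENO weight `α_{R,i,h}`, with `r' = ⌈(R-1)/2⌉ = R/2` (ℕ-division). -/
noncomputable def wenoAlpha (R : ℕ) (c : ℕ → ℝ) (z : ℝ) (f : ℝ → ℝ) (s : ℕ) (ε : ℝ)
    (i : ℕ) (h : ℝ) : ℝ :=
  (1 / (((R / 2 : ℕ) : ℝ) + 1)) *
    (1 + (wenoD R c z f h) ^ s / ((wenoI R c z f i h) ^ s + ε))

/-- Normalized WENO weight `ω_{R,i,h}`. -/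
noncomputable def wenoOmega (R : ℕ) (c : ℕ → ℝ) (z : ℝ) (f : ℝ → ℝ) (s : ℕ) (ε : ℝ)
    (i : ℕ) (h : ℝ) : ℝ :=
  wenoAlpha R c z f s ε i h / ∑ j ∈ Finset.range (R / 2 + 1), wenoAlpha R c z f s ε j h

/-- Global average weight `ω_{R,h}`. -/
noncomputable def wenoOmegaG (R : ℕ) (c : ℕ → ℝ) (z : ℝ) (f : ℝ → ℝ) (s : ℕ) (ε : ℝ)
    (h : ℝ) : ℝ :=
  1 / (1 + (wenoD R c z f h) ^ s *
        ∑ i ∈ Finset.range (R / 2 + 1), 1 / ((wenoI R c z f i h) ^ s + ε))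


open Filter Topology Asymptotics in
lemma weno_taylor (z : ℝ) (f : ℝ → ℝ) (U : Set ℝ) (hU : U ∈ nhds z)
    (hf : ContDiffOn ℝ (⊤ : ℕ∞) f U) (n : ℕ) (a : ℝ) :
    (fun h : ℝ => f (z + a * h) -
      ∑ j ∈ Finset.range (n + 1), iteratedDeriv j f z / (j.factorial : ℝ) * a ^ j * h ^ j)
      =o[𝓝 0] fun h : ℝ => h ^ n := by
  obtain ⟨δ, hδ, hball⟩ := Metric.mem_nhds_iff.1 hU
  have hzb : z ∈ Metric.ball z δ := Metric.mem_ball_self hδ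
  have hf' : ContDiffOn ℝ n f (Metric.ball z δ) :=
    (hf.mono hball).of_le (by exact_mod_cast le_top)
  have h1 := taylor_isLittleO (convex_ball z δ) hzb hf'
  rw [Metric.isOpen_ball.nhdsWithin_eq hzb] at h1
  have ht : Tendsto (fun h : ℝ => z + a * h) (𝓝 0) (𝓝 z) := by
    have : Continuous (fun h : ℝ => z + a * h) := by fun_prop
    simpa using this.tendsto 0
  have h2 := h1.comp_tendsto ht
  have h3 : ((fun x ↦ (x - z) ^ n) ∘ fun h : ℝ => z + a * h) =O[𝓝 0] fun h : ℝ => h ^ n := by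
    refine IsBigO.of_bound (|a| ^ n) (Eventually.of_forall fun h => ?_)
    simp [mul_pow]
  refine (h2.trans_isBigO h3).congr_left fun h => ?_
  simp only [Function.comp, taylor_within_apply]
  congr 1
  refine Finset.sum_congr rfl fun j _ => ?_
  rw [iteratedDerivWithin_eq_iteratedDeriv Metric.isOpen_ball.uniqueDiffOn ?_ hzb]
  · simp [mul_pow]; ring
  · exact ((hf.contDiffAt hU).of_le (by exact_mod_cast le_top))

lemma weno_moment (R : ℕ) (c : ℕ → ℝ)
    (hc : ∀ i j : ℕ, i < j → j < R → c i < c j) (m : ℕ) (hm : m + 1 < R) :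
    ∑ i ∈ Finset.range R, c i ^ m / ∏ j ∈ (Finset.range R).erase i, (c i - c j) = 0 := by
  have hinj : Set.InjOn c (Finset.range R) := by
    intro i hi j hj hij
    simp at hi hj
    rcases lt_trichotomy i j with h | h | h
    · exact absurd hij (hc i j h hj).ne
    · exact h
    · exact absurd hij (hc j i h hi).ne'
  have h := Lagrange.coeff_eq_sum (P := (Polynomial.X : Polynomial ℝ) ^ m) hinj
    (by rw [Polynomial.degree_X_pow, Finset.card_range]; exact_mod_cast (by omega : m < R))
  rw [Finset.card_range, Polynomial.coeff_X_pow, if_neg (by omega)] at h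
  simpa using h.symm

open Filter Topology Asymptotics in
lemma weno_D_bigO (R : ℕ) (hR : 3 ≤ R) (c : ℕ → ℝ)
    (hc : ∀ i j : ℕ, i < j → j < R → c i < c j)
    (z : ℝ) (f : ℝ → ℝ) (U : Set ℝ) (hU : U ∈ nhds z)
    (hf : ContDiffOn ℝ (⊤ : ℕ∞) f U) :
    (fun h => wenoD R c z f h) =O[𝓝 0] fun h : ℝ => h ^ (2 * (R - 1)) := by
  unfold wenoD
  simp_rw [mul_comm 2 (R - 1), pow_mul]
  refine IsBigO.pow (IsBigO.const_mul_left ?_ _) 2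
  have h1 : (fun h : ℝ => ∑ i ∈ Finset.range R, (f (z + c i * h) -
      ∑ j ∈ Finset.range (R - 1 + 1), iteratedDeriv j f z / (j.factorial : ℝ) * c i ^ j * h ^ j)
        * (∏ j ∈ (Finset.range R).erase i, (c i - c j))⁻¹) =O[𝓝 0] fun h : ℝ => h ^ (R - 1) := by
    refine IsBigO.fun_sum (E' := ℝ) fun i _ => ?_
    refine ((weno_taylor z f U hU hf (R - 1) (c i)).isBigO.const_mul_left
      (∏ j ∈ (Finset.range R).erase i, (c i - c j))⁻¹).congr_left fun h => mul_comm _ _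
  have h2 : (fun h : ℝ => (iteratedDeriv (R - 1) f z / ((R - 1).factorial : ℝ) *
      ∑ i ∈ Finset.range R, c i ^ (R - 1) / ∏ j ∈ (Finset.range R).erase i, (c i - c j))
      * h ^ (R - 1)) =O[𝓝 0] fun h : ℝ => h ^ (R - 1) :=
    (isBigO_refl (fun h : ℝ => h ^ (R - 1)) _).const_mul_left _
  refine (h1.add h2).congr_left fun h => ?_
  have h3 : ∑ i ∈ Finset.range R,
      (∑ j ∈ Finset.range (R - 1 + 1), iteratedDeriv j f z / (j.factorial : ℝ) * c i ^ j * h ^ j)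
        * (∏ j ∈ (Finset.range R).erase i, (c i - c j))⁻¹ =
      (iteratedDeriv (R - 1) f z / ((R - 1).factorial : ℝ) *
      ∑ i ∈ Finset.range R, c i ^ (R - 1) / ∏ j ∈ (Finset.range R).erase i, (c i - c j))
      * h ^ (R - 1) := by
    simp_rw [Finset.sum_mul]
    rw [Finset.sum_comm]
    have : ∀ j, ∑ i ∈ Finset.range R, iteratedDeriv j f z / (j.factorial : ℝ) * c i ^ j * h ^ j
        * (∏ j ∈ (Finset.range R).erase i, (c i - c j))⁻¹ =
        iteratedDeriv j f z / (j.factorial : ℝ) * h ^ j *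
          ∑ i ∈ Finset.range R, c i ^ j / ∏ j ∈ (Finset.range R).erase i, (c i - c j) := by
      intro j
      rw [Finset.mul_sum]
      refine Finset.sum_congr rfl fun i _ => ?_
      rw [div_eq_mul_inv (c i ^ j)]; ring
    simp_rw [this]
    rw [Finset.sum_range_succ, Finset.sum_eq_zero]
    · ring
    · intro j hj
      rw [weno_moment R c hc j (by have := Finset.mem_range.1 hj; omega), mul_zero]
  simp_rw [sub_mul]
  rw [Finset.sum_sub_distrib, h3, sub_add_cancel]
  refine Finset.sum_congr rfl fun i _ => ?_
  rw [div_eq_mul_inv]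

lemma weno_pow_ne {x y : ℝ} (hxy : x < y) {k : ℕ} (h : Even k ∨ x + y ≠ 0) :
    y ^ (k + 1) - x ^ (k + 1) ≠ 0 := by
  intro h0
  rcases Nat.even_or_odd k with hk | hk
  · have := hk.add_one.strictMono_pow (R := ℝ) hxy
    simp only at this
    linarith
  · have h' : x + y ≠ 0 := h.resolve_left (Nat.not_even_iff_odd.2 hk)
    have he : Even (k + 1) := hk.add_one
    have h1 : |y| ^ (k + 1) = |x| ^ (k + 1) := by
      rw [he.pow_abs, he.pow_abs]; linarith
    have h2 : |y| = |x| :=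
      (pow_left_inj₀ (abs_nonneg _) (abs_nonneg _) (by omega)).1 h1
    rcases abs_eq_abs.1 h2 with h3 | h3
    · linarith
    · exact h' (by linarith)

open Filter Topology Asymptotics in
lemma weno_diff_bigO (z : ℝ) (f : ℝ → ℝ) (U : Set ℝ) (hU : U ∈ nhds z)
    (hf : ContDiffOn ℝ (⊤ : ℕ∞) f U) (k : ℕ)
    (hcrit : ∀ j : ℕ, 1 ≤ j → j ≤ k → iteratedDeriv j f z = 0)
    (hk1 : iteratedDeriv (k + 1) f z ≠ 0) {x y : ℝ}
    (hxy : y ^ (k + 1) - x ^ (k + 1) ≠ 0) :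
    (fun h : ℝ => h ^ (k + 1)) =O[𝓝 0] fun h : ℝ => f (z + y * h) - f (z + x * h) := by
  have hs : ∀ a h : ℝ, ∑ j ∈ Finset.range (k + 1 + 1),
      iteratedDeriv j f z / (j.factorial : ℝ) * a ^ j * h ^ j =
      f z + iteratedDeriv (k + 1) f z / ((k + 1).factorial : ℝ) * a ^ (k + 1) * h ^ (k + 1) := by
    intro a h
    rw [Finset.sum_range_succ, Finset.sum_range_succ', Finset.sum_eq_zero]
    · simp
    · intro j hj
      rw [hcrit (j + 1) (by omega) (by have := Finset.mem_range.1 hj; omega)]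
      simp
  have h1 := (weno_taylor z f U hU hf (k + 1) y).sub (weno_taylor z f U hU hf (k + 1) x)
  simp only [hs] at h1
  set A := iteratedDeriv (k + 1) f z / ((k + 1).factorial : ℝ) * (y ^ (k + 1) - x ^ (k + 1))
    with hA
  have hA0 : A ≠ 0 := mul_ne_zero (div_ne_zero hk1 (by positivity)) hxy
  have h2 : (fun h : ℝ => (f (z + y * h) - f (z + x * h)) - A * h ^ (k + 1))
      =o[𝓝 0] fun h : ℝ => A * h ^ (k + 1) := by
    refine (h1.congr_left fun h => ?_).trans_isBigO
      ((isBigO_refl (fun h : ℝ => h ^ (k + 1)) _).const_mul_right hA0)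
    rw [hA]; ring
  have h3 := h2.right_isBigO_add
  have h4 : (fun h : ℝ => h ^ (k + 1)) =O[𝓝 0] fun h : ℝ => A * h ^ (k + 1) :=
    (isBigO_refl (fun h : ℝ => h ^ (k + 1)) _).const_mul_right hA0
  exact (h4.trans h3).congr_right fun h => by ring

open Filter Topology Asymptotics in
lemma weno_I_lower (R : ℕ) (hR : 3 ≤ R) (c : ℕ → ℝ)
    (hc : ∀ i j : ℕ, i < j → j < R → c i < c j)
    (z : ℝ) (f : ℝ → ℝ) (U : Set ℝ) (hU : U ∈ nhds z)
    (hf : ContDiffOn ℝ (⊤ : ℕ∞) f U)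
    (k : ℕ)
    (hcrit : ∀ j : ℕ, 1 ≤ j → j ≤ k → iteratedDeriv j f z = 0)
    (hk1 : iteratedDeriv (k + 1) f z ≠ 0)
    (hexc : 5 ≤ R ∨ Even k ∨ ∀ j : ℕ, j ≤ R - 2 → c j + c (j + 1) ≠ 0)
    (i : ℕ) (hi : i ∈ Finset.range (R / 2 + 1)) :
    (fun h : ℝ => h ^ (2 * (k + 1))) =O[𝓝 0] fun h : ℝ => wenoI R c z f i h := by
  have hi' := Finset.mem_range.1 hi
  obtain ⟨j, hj, hjj⟩ : ∃ j ∈ Finset.Ico i (i + (R - 1) / 2),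
      (Even k ∨ c j + c (j + 1) ≠ 0) := by
    rcases hexc with h | h | h
    · by_cases h0 : c i + c (i + 1) = 0
      · refine ⟨i + 1, Finset.mem_Ico.2 ⟨by omega, by omega⟩, Or.inr ?_⟩
        have := hc i (i + 1 + 1) (by omega) (by omega)
        intro h1
        linarith
      · exact ⟨i, Finset.mem_Ico.2 ⟨by omega, by omega⟩, Or.inr h0⟩
    · exact ⟨i, Finset.mem_Ico.2 ⟨by omega, by omega⟩, Or.inl h⟩
    · exact ⟨i, Finset.mem_Ico.2 ⟨by omega, by omega⟩, Or.inr (h i (by omega))⟩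
  have hj' := Finset.mem_Ico.1 hj
  have hlt : c j < c (j + 1) := hc j (j + 1) (by omega) (by omega)
  have h1 := weno_diff_bigO z f U hU hf k hcrit hk1 (weno_pow_ne hlt hjj)
  have h2 : (fun h : ℝ => f (z + c (j + 1) * h) - f (z + c j * h)) =O[𝓝 0]
      fun h : ℝ => (f (z + c (j + 1) * h) - f (z + c j * h)) / (c (j + 1) - c j) := by
    refine ((isBigO_refl (fun h : ℝ => f (z + c (j + 1) * h) - f (z + c j * h)) _).const_mul_right
      (inv_ne_zero (sub_pos.2 hlt).ne')).congr_right fun h => ?_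
    rw [div_eq_mul_inv, mul_comm]
  have h3 := (h1.trans h2).pow 2
  have h4 : (fun h : ℝ => h ^ (2 * (k + 1))) =O[𝓝 0]
      fun h : ℝ => ((f (z + c (j + 1) * h) - f (z + c j * h)) / (c (j + 1) - c j)) ^ 2 :=
    h3.congr_left fun h => by ring
  refine h4.trans (IsBigO.of_bound 1 (Eventually.of_forall fun h => ?_))
  have hle : ((f (z + c (j + 1) * h) - f (z + c j * h)) / (c (j + 1) - c j)) ^ 2 ≤
      wenoI R c z f i h :=
    Finset.single_le_sum
      (f := fun j => ((f (z + c (j + 1) * h) - f (z + c j * h)) / (c (j + 1) - c j)) ^ 2)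
      (fun j _ => sq_nonneg _) hj
  rw [Real.norm_of_nonneg (sq_nonneg _), one_mul]
  exact hle.trans (le_abs_self _)

/-- **Global weight in the smooth case.** Under the smooth critical-point setup, the global
weight `ω_{R,h}` lies in `[0,1]` and `1 - ω_{R,h} = O(h^{2s(R-2-k)})`, uniformly in `ε > 0`. -/
theorem stmt_8 (R : ℕ) (hR : 3 ≤ R) (c : ℕ → ℝ)
    (hc : ∀ i j : ℕ, i < j → j < R → c i < c j)
    (z : ℝ) (f : ℝ → ℝ) (U : Set ℝ) (hU : U ∈ nhds z)
    (hf : ContDiffOn ℝ (⊤ : ℕ∞) f U)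
    (k : ℕ) (hk : k ≤ R - 2)
    (hcrit : ∀ j : ℕ, 1 ≤ j → j ≤ k → iteratedDeriv j f z = 0)
    (hk1 : iteratedDeriv (k + 1) f z ≠ 0)
    (hexc : 5 ≤ R ∨ Even k ∨ ∀ j : ℕ, j ≤ R - 2 → c j + c (j + 1) ≠ 0)
    (s : ℕ) (hs : 1 ≤ s) :
    (∀ ε > (0 : ℝ), ∀ h : ℝ, 0 < h →
        0 ≤ wenoOmegaG R c z f s ε h ∧ wenoOmegaG R c z f s ε h ≤ 1) ∧
    ∃ C > (0 : ℝ), ∃ h₀ > (0 : ℝ), ∀ ε > (0 : ℝ), ∀ h : ℝ, 0 < h → h < h₀ →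
      0 ≤ 1 - wenoOmegaG R c z f s ε h ∧
        1 - wenoOmegaG R c z f s ε h ≤ C * h ^ (2 * s * (R - 2 - k)) := by
  have hI : ∀ i h, 0 ≤ wenoI R c z f i h := fun i h => Finset.sum_nonneg fun j _ => sq_nonneg _
  have hD : ∀ h, 0 ≤ wenoD R c z f h := fun h => sq_nonneg _
  have hX : ∀ ε > (0 : ℝ), ∀ h : ℝ, 0 ≤ (wenoD R c z f h) ^ s *
        ∑ i ∈ Finset.range (R / 2 + 1), 1 / ((wenoI R c z f i h) ^ s + ε) := by
    intro ε hε h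
    refine mul_nonneg (pow_nonneg (hD h) s) (Finset.sum_nonneg fun i _ => ?_)
    have := pow_nonneg (hI i h) s
    positivity
  have hω : ∀ ε > (0 : ℝ), ∀ h : ℝ,
      0 ≤ wenoOmegaG R c z f s ε h ∧ wenoOmegaG R c z f s ε h ≤ 1 := by
    intro ε hε h
    have := hX ε hε h
    unfold wenoOmegaG
    refine ⟨by positivity, ?_⟩
    rw [div_le_one (by linarith)]
    linarith
  refine ⟨fun ε hε h _ => hω ε hε h, ?_⟩
  -- bounds
  obtain ⟨A, hA, hDb⟩ := (weno_D_bigO R hR c hc z f U hU hf).exists_pos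
  have hex : ∀ i ∈ Finset.range (R / 2 + 1), ∃ B > (0 : ℝ), ∀ᶠ h in nhds (0 : ℝ),
      ‖h ^ (2 * (k + 1))‖ ≤ B * ‖wenoI R c z f i h‖ := by
    intro i hi
    obtain ⟨B, hB, hb⟩ :=
      (weno_I_lower R hR c hc z f U hU hf k hcrit hk1 hexc i hi).exists_pos
    exact ⟨B, hB, hb.bound⟩
  choose! B hB hIb using hex
  have hall : ∀ᶠ h in nhds (0 : ℝ), (∀ i ∈ Finset.range (R / 2 + 1),
      ‖h ^ (2 * (k + 1))‖ ≤ B i * ‖wenoI R c z f i h‖) ∧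
      ‖wenoD R c z f h‖ ≤ A * ‖h ^ (2 * (R - 1))‖ :=
    ((Finset.range (R / 2 + 1)).eventually_all.2 hIb).and hDb.bound
  obtain ⟨δ, hδ, hball⟩ := Metric.eventually_nhds_iff.1 hall
  refine ⟨∑ i ∈ Finset.range (R / 2 + 1), (A * B i) ^ s, ?_, δ, hδ, ?_⟩
  · exact Finset.sum_pos (fun i hi => pow_pos (mul_pos hA (hB i hi)) s) ⟨0, by simp⟩
  intro ε hε h hh hhδ
  refine ⟨by linarith [(hω ε hε h).2], ?_⟩
  obtain ⟨hb1, hb2⟩ := hball (y := h) (by simpa [abs_of_pos hh] using hhδ)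
  rw [Real.norm_of_nonneg (hD h), Real.norm_of_nonneg (by positivity)] at hb2
  have hX0 := hX ε hε h
  have hstep : 1 - wenoOmegaG R c z f s ε h ≤ (wenoD R c z f h) ^ s *
        ∑ i ∈ Finset.range (R / 2 + 1), 1 / ((wenoI R c z f i h) ^ s + ε) := by
    unfold wenoOmegaG
    generalize (wenoD R c z f h) ^ s *
        ∑ i ∈ Finset.range (R / 2 + 1), 1 / ((wenoI R c z f i h) ^ s + ε) = X at hX0 ⊢
    have h1 : 1 - 1 / (1 + X) = X / (1 + X) := by field_simp; ring
    rw [h1]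
    exact div_le_self hX0 (by linarith)
  refine hstep.trans ?_
  rw [Finset.mul_sum, Finset.sum_mul]
  refine Finset.sum_le_sum fun i hi => ?_
  have hb := hb1 i hi
  rw [Real.norm_of_nonneg (hI i h), Real.norm_of_nonneg (by positivity)] at hb
  have hBi := hB i hi
  have hpos : 0 < h ^ (2 * (k + 1)) := by positivity
  have hIpos : 0 < wenoI R c z f i h := by
    rcases (hI i h).lt_or_eq with h' | h'
    · exact h'
    · rw [← h', mul_zero] at hb; linarith
  have hIs : 0 < (wenoI R c z f i h) ^ s := pow_pos hIpos s
  have hexp : h ^ (2 * (R - 1)) = h ^ (2 * (R - 2 - k)) * h ^ (2 * (k + 1)) := by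
    rw [← pow_add]; congr 1; omega
  have hq : wenoD R c z f h ≤ A * B i * h ^ (2 * (R - 2 - k)) * wenoI R c z f i h := by
    calc wenoD R c z f h ≤ A * h ^ (2 * (R - 1)) := hb2
      _ = A * h ^ (2 * (R - 2 - k)) * h ^ (2 * (k + 1)) := by rw [hexp]; ring
      _ ≤ A * h ^ (2 * (R - 2 - k)) * (B i * wenoI R c z f i h) := by gcongr
      _ = _ := by ring
  rw [mul_one_div, div_le_iff₀ (by linarith)]
  have hpw := pow_le_pow_left₀ (hD h) hq s
  have heq : (A * B i * h ^ (2 * (R - 2 - k)) * wenoI R c z f i h) ^ s =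
      (A * B i) ^ s * h ^ (2 * s * (R - 2 - k)) * (wenoI R c z f i h) ^ s := by
    rw [mul_pow, mul_pow, ← pow_mul]
    congr 3; ring
  rw [heq] at hpw
  refine hpw.trans ?_
  gcongr
  linarith
end

section
/- Assume the WENO weight setup in the jump setting, and additionally assume κ := Σ_{i=l+1}^{R−1} 1/Π_{j≠i}(c_i − c_j) ≠ 0 and that at least one substencil is clean. Then there exist C > 0 and h₀ > 0 such that for every ε with 0 < ε ≤ 1 and every 0 < h < h₀: 0 ≤ ω_{R,h} ≤ C·(h^{2s} + ε). -/
theorem aux_sum_zero (R : ℕ) (hR : 3 ≤ R) (c : ℕ → ℝ)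
    (hc : ∀ i j : ℕ, i < j → j < R → c i < c j) :
    ∑ i ∈ Finset.range R, 1 / ∏ j ∈ (Finset.range R).erase i, (c i - c j) = 0 := by
  have hinj : Set.InjOn c (Finset.range R : Set ℕ) := by
    intro i hi j hj hij
    simp at hi hj
    rcases lt_trichotomy i j with h | h | h
    · exact absurd hij (hc i j h hj).ne
    · exact h
    · exact absurd hij (hc j i h hi).ne'
  have h := Lagrange.coeff_eq_sum hinj (P := (1 : Polynomial ℝ)) (by
    rw [Finset.card_range, Polynomial.degree_one]; exact_mod_cast (by omega : 0 < R))
  rw [Finset.card_range, Polynomial.coeff_one, if_neg (by omega)] at h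
  simpa using h.symm

open Filter Topology Asymptotics in
theorem aux_node (g : ℝ → ℝ) (z a : ℝ) (hg : DifferentiableAt ℝ g z) :
    (fun h : ℝ => g (z + a * h) - g z) =O[𝓝[>] 0] (fun h : ℝ => h) := by
  have h1 : DifferentiableAt ℝ (fun h : ℝ => g (z + a * h)) 0 := by
    apply DifferentiableAt.comp (g := g) (f := fun h : ℝ => z + a * h)
    · simpa using hg
    · fun_prop
  have h2 := h1.isBigO_sub
  simp only [mul_zero, add_zero, sub_zero] at h2
  exact h2.mono nhdsWithin_le_nhds

open Filter Topology Asymptotics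

/-- **The global weight is small at a jump.** In the jump setting, if `κ ≠ 0` and at least one
substencil is clean, then `0 ≤ ω_{R,h} ≤ C (h^{2s} + ε)` for small `h` and `0 < ε ≤ 1`. -/
theorem stmt_10 (R : ℕ) (hR : 3 ≤ R) (c : ℕ → ℝ)
    (hc : ∀ i j : ℕ, i < j → j < R → c i < c j)
    (z : ℝ) (fL fR f : ℝ → ℝ) (U : Set ℝ) (hU : U ∈ nhds z)
    (hfL : ContDiffOn ℝ (⊤ : ℕ∞) fL U) (hfR : ContDiffOn ℝ (⊤ : ℕ∞) fR U)
    (hjump : fL z ≠ fR z)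
    (hf : ∀ x : ℝ, f x = if x < z then fL x else fR x)
    (l : ℕ) (hl : l + 1 < R) (hcl : c l < 0) (hcl' : 0 ≤ c (l + 1))
    (hκ : ∑ i ∈ Finset.Ico (l + 1) R,
        1 / ∏ j ∈ (Finset.range R).erase i, (c i - c j) ≠ 0)
    (hclean : ∃ i ≤ R / 2, ¬(i ≤ l ∧ l ≤ i + (R - 1) / 2 - 1))
    (s : ℕ) (hs : 1 ≤ s) :
    ∃ C > (0 : ℝ), ∃ h₀ > (0 : ℝ), ∀ ε : ℝ, 0 < ε → ε ≤ 1 → ∀ h : ℝ, 0 < h → h < h₀ →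
      0 ≤ wenoOmegaG R c z f s ε h ∧
        wenoOmegaG R c z f s ε h ≤ C * (h ^ (2 * s) + ε) := by
  classical
  have hinf : ((⊤ : ℕ∞) : WithTop ℕ∞) ≠ 0 := by simp
  have hdL : DifferentiableAt ℝ fL z := (hfL.contDiffAt hU).differentiableAt hinf
  have hdR : DifferentiableAt ℝ fR z := (hfR.contDiffAt hU).differentiableAt hinf
  have hr : 1 ≤ (R - 1) / 2 := by omega
  set v : ℕ → ℝ := fun i => if i ≤ l then fL z else fR z with hv
  have hnode : ∀ i, i < R →
      (fun h : ℝ => f (z + c i * h) - v i) =O[𝓝[>] 0] (fun h : ℝ => h) := by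
    intro i hi
    by_cases hil : i ≤ l
    · have hci : c i < 0 := by
        rcases hil.lt_or_eq with h | h
        · exact (hc i l h (by omega)).trans hcl
        · rw [h]; exact hcl
      refine (aux_node fL z (c i) hdL).congr' ?_ EventuallyEq.rfl
      filter_upwards [self_mem_nhdsWithin] with h hh
      have : z + c i * h < z := by
        have := mul_neg_of_neg_of_pos hci hh
        linarith
      simp only [hv, if_pos hil, hf, if_pos this]
    · have hci : 0 ≤ c i := by
        rcases (show l + 1 ≤ i by omega).lt_or_eq with h | h
        · exact hcl'.trans (hc _ _ h hi).le
        · rw [← h]; exact hcl'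
      refine (aux_node fR z (c i) hdR).congr' ?_ EventuallyEq.rfl
      filter_upwards [self_mem_nhdsWithin] with h hh
      have : ¬ z + c i * h < z := by
        have := mul_nonneg hci (le_of_lt (show (0:ℝ) < h from hh))
        linarith
      simp only [hv, if_neg hil, hf, if_neg this]
  have hid : Tendsto (fun h : ℝ => h) (𝓝[>] 0) (𝓝 0) := nhdsWithin_le_nhds
  have hlim : ∀ i, i < R → Tendsto (fun h : ℝ => f (z + c i * h)) (𝓝[>] 0) (𝓝 (v i)) := by
    intro i hi
    exact tendsto_sub_nhds_zero_iff.mp ((hnode i hi).trans_tendsto hid)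
  -- limit of D
  set w : ℕ → ℝ := fun i => ∏ j ∈ (Finset.range R).erase i, (c i - c j) with hw
  set κ : ℝ := ∑ i ∈ Finset.Ico (l + 1) R, 1 / w i with hκd
  have hsum : ∑ i ∈ Finset.range R, v i / w i = (fR z - fL z) * κ := by
    have h0 : ∑ i ∈ Finset.range R, 1 / w i = 0 := aux_sum_zero R hR c hc
    have h1 : ∑ i ∈ Finset.range R, v i / w i
        = ∑ i ∈ Finset.range R, (v i - fL z) / w i := by
      have : ∑ i ∈ Finset.range R, (v i - fL z) / w i
          = ∑ i ∈ Finset.range R, v i / w i - fL z * ∑ i ∈ Finset.range R, 1 / w i := by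
        rw [Finset.mul_sum, ← Finset.sum_sub_distrib]
        refine Finset.sum_congr rfl fun i _ => ?_
        ring
      rw [this, h0]; ring
    rw [h1, ← Finset.sum_range_add_sum_Ico _ (show l + 1 ≤ R by omega), Finset.sum_eq_zero, zero_add,
      hκd, Finset.mul_sum]
    · refine Finset.sum_congr rfl fun i hi => ?_
      have : ¬ i ≤ l := by
        have := (Finset.mem_Ico.mp hi).1
        omega
      simp only [hv, if_neg this]
      ring
    · intro i hi
      have : i ≤ l := by
        have := Finset.mem_range.mp hi
        omega
      simp [hv, if_pos this]
  have hD : Tendsto (fun h => wenoD R c z f h) (𝓝[>] 0)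
      (𝓝 ((((R - 1).factorial : ℝ) * ((fR z - fL z) * κ)) ^ 2)) := by
    rw [← hsum]
    unfold wenoD
    refine (Tendsto.const_mul _ (tendsto_finsetSum _ fun i hi => ?_)).pow 2
    exact (hlim i (Finset.mem_range.mp hi)).div_const _
  have hLpos : 0 < (((R - 1).factorial : ℝ) * ((fR z - fL z) * κ)) ^ 2 := by
    have : (((R - 1).factorial : ℝ) * ((fR z - fL z) * κ)) ≠ 0 :=
      mul_ne_zero (by exact_mod_cast (Nat.factorial_pos _).ne')
        (mul_ne_zero (sub_ne_zero.mpr hjump.symm) hκ)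
    positivity
  generalize (((R - 1).factorial : ℝ) * ((fR z - fL z) * κ)) ^ 2 = L at hD hLpos
  obtain ⟨i, hi, hic⟩ := hclean
  have hI : (fun h => wenoI R c z f i h) =O[𝓝[>] 0] (fun h : ℝ => h ^ 2) := by
    unfold wenoI
    refine IsBigO.fun_sum fun j hj => ?_
    rw [Finset.mem_Ico] at hj
    refine IsBigO.pow ?_ 2
    have hvj : v (j + 1) = v j := by
      simp only [hv]
      by_cases h : j ≤ l
      · rw [if_pos (by omega), if_pos h]
      · rw [if_neg (by omega), if_neg h]
    have h1 := (hnode (j + 1) (by omega)).sub (hnode j (by omega))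
    have h2 := h1.const_mul_left (c (j + 1) - c j)⁻¹
    refine h2.congr_left fun h => ?_
    rw [hvj]; ring
  obtain ⟨K, hK, hKb⟩ := hI.exists_pos
  have hev := (hKb.bound).and (hD.eventually (lt_mem_nhds (half_lt_self hLpos)))
  obtain ⟨h₀, hh₀, hsub⟩ := mem_nhdsGT_iff_exists_Ioo_subset.mp hev
  refine ⟨(K ^ s + 1) / (L / 2) ^ s, by positivity, h₀, hh₀, ?_⟩
  intro ε hε _ h hh hlt
  obtain ⟨hb1, hb2⟩ := hsub (show h ∈ Set.Ioo 0 h₀ from ⟨hh, hlt⟩)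
  have hI0 : ∀ k, 0 ≤ wenoI R c z f k h := fun k => by
    unfold wenoI; positivity
  have hD0 : 0 < wenoD R c z f h := lt_trans (by positivity) hb2
  have hb1' : wenoI R c z f i h ≤ K * h ^ 2 := by
    rw [Real.norm_of_nonneg (hI0 i), Real.norm_of_nonneg (by positivity)] at hb1
    exact hb1
  have hterm : ∀ k, 0 < 1 / ((wenoI R c z f k h) ^ s + ε) := fun k => by
    have := hI0 k
    positivity
  have hS : 1 / ((wenoI R c z f i h) ^ s + ε) ≤
      ∑ k ∈ Finset.range (R / 2 + 1), 1 / ((wenoI R c z f k h) ^ s + ε) :=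
    Finset.single_le_sum (f := fun k => 1 / ((wenoI R c z f k h) ^ s + ε))
      (fun k _ => (hterm k).le) (Finset.mem_range.mpr (by omega))
  have hIs : (wenoI R c z f i h) ^ s ≤ K ^ s * h ^ (2 * s) := by
    rw [pow_mul, ← mul_pow]
    exact pow_le_pow_left₀ (hI0 i) hb1' s
  have hDs : (L / 2) ^ s ≤ (wenoD R c z f h) ^ s :=
    pow_le_pow_left₀ (by positivity) hb2.le s
  have hLs : 0 < (L / 2) ^ s := by positivity
  have hIe : 0 < (wenoI R c z f i h) ^ s + ε := by
    have := hI0 i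
    positivity
  have hlow : (L / 2) ^ s * (1 / ((wenoI R c z f i h) ^ s + ε)) ≤
      1 + (wenoD R c z f h) ^ s *
        ∑ k ∈ Finset.range (R / 2 + 1), 1 / ((wenoI R c z f k h) ^ s + ε) := by
    have := mul_le_mul hDs hS (hterm i).le (by positivity)
    linarith
  have hpos : 0 < (L / 2) ^ s * (1 / ((wenoI R c z f i h) ^ s + ε)) := mul_pos hLs (hterm i)
  unfold wenoOmegaG
  refine ⟨one_div_nonneg.mpr (hpos.le.trans hlow), ?_⟩
  refine (one_div_le_one_div_of_le hpos hlow).trans ?_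
  have e1 : 1 / ((L / 2) ^ s * (1 / ((wenoI R c z f i h) ^ s + ε)))
      = ((wenoI R c z f i h) ^ s + ε) / (L / 2) ^ s := by
    field_simp
  rw [e1, div_mul_eq_mul_div]
  refine div_le_div_of_nonneg_right ?_ hLs.le
  have : 0 ≤ K ^ s * ε := by positivity
  have : 0 ≤ h ^ (2 * s) := by positivity
  nlinarith
end
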